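/- arXiv:2205.05068 — 2 statements merged into one kernel-verified Lean document; each statement's English description precedes it below -/
import Mathlib

section
/- Secrecy-leakage converse bound (middle/large key regime): under the converse setup, I(X̃^n; W | Z^n) ≥ Σ_{i=1}^n I(V_i; X̃_i | Z_i). -/
open MeasureTheory

noncomputable section

/-- Probability mass `P[X = x]` of a finitely-valued random variable `X` on `(Ω, μ)`. -/
def pmass {Ω : Type*} [MeasurableSpace Ω] (μ : Measure Ω) {α : Type*}
    (X : Ω → α) (x : α) : ℝ :=
  (μ (X ⁻¹' {x})).toReal

/-- Shannon entropy `H(X)` (in nats) of a finitely-valued random variable. -/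
def entropyRV {Ω : Type*} [MeasurableSpace Ω] (μ : Measure Ω) {α : Type*} [Fintype α]
    (X : Ω → α) : ℝ :=
  ∑ x : α, Real.negMulLog (pmass μ X x)

/-- Conditional Shannon entropy `H(X | Y)`. -/
def condEntropyRV {Ω : Type*} [MeasurableSpace Ω] (μ : Measure Ω) {α β : Type*}
    [Fintype α] [Fintype β] (X : Ω → α) (Y : Ω → β) : ℝ :=
  entropyRV μ (fun ω => (X ω, Y ω)) - entropyRV μ Y

/-- Mutual information `I(X;Y)`. -/
def mutualInfoRV {Ω : Type*} [MeasurableSpace Ω] (μ : Measure Ω) {α β : Type*}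
    [Fintype α] [Fintype β] (X : Ω → α) (Y : Ω → β) : ℝ :=
  entropyRV μ X + entropyRV μ Y - entropyRV μ (fun ω => (X ω, Y ω))

/-- Conditional mutual information `I(X;Y|Z)`. -/
def condMutualInfoRV {Ω : Type*} [MeasurableSpace Ω] (μ : Measure Ω) {α β γ : Type*}
    [Fintype α] [Fintype β] [Fintype γ] (X : Ω → α) (Y : Ω → β) (Z : Ω → γ) : ℝ :=
  entropyRV μ (fun ω => (X ω, Z ω)) + entropyRV μ (fun ω => (Y ω, Z ω))
    - entropyRV μ Z - entropyRV μ (fun ω => (X ω, Y ω, Z ω))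

/-- Expected value `E[f(X)]` of a function of a finitely-valued random variable. -/
def expVal {Ω : Type*} [MeasurableSpace Ω] (μ : Measure Ω) {α : Type*} [Fintype α]
    (X : Ω → α) (f : α → ℝ) : ℝ :=
  ∑ a : α, pmass μ X a * f a

/-- Independence of two finitely-valued random variables, via their joint mass. -/
def IndepRV {Ω : Type*} [MeasurableSpace Ω] (μ : Measure Ω) {α β : Type*}
    (X : Ω → α) (Y : Ω → β) : Prop :=
  ∀ a b, pmass μ (fun ω => (X ω, Y ω)) (a, b) = pmass μ X a * pmass μ Y b

/-- Conditional independence of `A` and `C` given `B` (the Markov chain `A − B − C`)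
for finitely-valued random variables, via joint masses. -/
def CondIndepRV {Ω : Type*} [MeasurableSpace Ω] (μ : Measure Ω) {α β γ : Type*}
    (A : Ω → α) (B : Ω → β) (C : Ω → γ) : Prop :=
  ∀ a b c,
    pmass μ (fun ω => (A ω, B ω, C ω)) (a, b, c) * pmass μ B b
      = pmass μ (fun ω => (A ω, B ω)) (a, b) * pmass μ (fun ω => (B ω, C ω)) (b, c)

/-- `X` is uniformly distributed on its (finite) alphabet. -/
def UniformRV {Ω : Type*} [MeasurableSpace Ω] (μ : Measure Ω) {α : Type*} [Fintype α]
    (X : Ω → α) : Prop :=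
  ∀ x, pmass μ X x = 1 / (Fintype.card α : ℝ)

/-- The sequence `S = (S_1, …, S_n)` is i.i.d. with single-letter pmf `p`. -/
def HasIIDLaw {Ω : Type*} [MeasurableSpace Ω] (μ : Measure Ω) {α : Type*} {n : ℕ}
    (S : Ω → Fin n → α) (p : α → ℝ) : Prop :=
  ∀ v : Fin n → α, pmass μ S v = ∏ i, p (v i)

/-- `[a]⁻ = min {a, 0}`. -/
def negPartR (a : ℝ) : ℝ := min a 0

/-!
Write `I(X̃ⁿ; W | Zⁿ) = H(X̃ⁿ | Zⁿ) - H(X̃ⁿ | W, Zⁿ)`. The letters are independent, so the first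
term is `∑ᵢ H(X̃ᵢ | Zᵢ)`. By the chain rule the second one is `∑ᵢ H(X̃ᵢ | X̃ᵢ₊₁ⁿ, W, Zⁿ)`, and
`H(X̃ᵢ | X̃ᵢ₊₁ⁿ, W, Zⁿ) ≤ H(X̃ᵢ | X̃ᵢ₊₁ⁿ, W, Zⁱ) = H(X̃ᵢ | Yᵢ₊₁ⁿ, X̃ᵢ₊₁ⁿ, W, Zⁱ) ≤ H(X̃ᵢ | Vᵢ, Zᵢ)`.
Both inequalities drop conditioning. The equality holds because `K` and the letters up to time `i`
are independent of the later letters and, together with `X̃ᵢ₊₁ⁿ`, determine `X̃ᵢ`, `W` and `Zⁱ`: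
given `X̃ᵢ₊₁ⁿ`, these carry no information on `Yᵢ₊₁ⁿ`.
-/

open ProbabilityTheory

section Mass

variable {Ω α β : Type*} [MeasurableSpace Ω] {μ : Measure Ω}

lemma pmass_eq_map_real [MeasurableSpace α] [MeasurableSingletonClass α] {X : Ω → α}
    (hX : Measurable X) (x : α) : pmass μ X x = (μ.map X).real {x} :=
  (map_measureReal_apply hX (measurableSet_singleton x)).symm

lemma pmass_nonneg (X : Ω → α) (x : α) : 0 ≤ pmass μ X x :=
  ENNReal.toReal_nonneg

lemma pmass_le_pmass_comp [IsFiniteMeasure μ] (X : Ω → α) (g : α → β) (x : α) :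
    pmass μ X x ≤ pmass μ (fun ω => g (X ω)) (g x) :=
  measureReal_mono fun _ hω => congrArg g hω

lemma pmass_comp_pos [IsFiniteMeasure μ] {X : Ω → α} {x : α} (hx : pmass μ X x ≠ 0) (g : α → β) :
    0 < pmass μ (fun ω => g (X ω)) (g x) :=
  ((pmass_nonneg X x).lt_of_ne' hx).trans_le (pmass_le_pmass_comp X g x)

lemma sum_pmass [Fintype α] [MeasurableSpace α] [MeasurableSingletonClass α]
    [IsProbabilityMeasure μ] {X : Ω → α} (hX : Measurable X) : ∑ x, pmass μ X x = 1 := by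
  have := Measure.isProbabilityMeasure_map (μ := μ) hX.aemeasurable
  simp [pmass_eq_map_real hX]

lemma sum_pmass_prodMk [Fintype α] [MeasurableSpace α] [MeasurableSingletonClass α]
    [IsFiniteMeasure μ] {X : Ω → α} (hX : Measurable X) (Y : Ω → β) (y : β) :
    ∑ x, pmass μ (fun ω => (X ω, Y ω)) (x, y) = pmass μ Y y := by
  have hfiber (x : α) : pmass μ (fun ω => (X ω, Y ω)) (x, y)
      = (μ.restrict (Y ⁻¹' {y})).real (X ⁻¹' {x}) := by
    rw [measureReal_restrict_apply (hX (measurableSet_singleton x)), ← Set.mk_preimage_prod,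
      Set.singleton_prod_singleton]
    rfl
  simp_rw [hfiber]
  rw [sum_measureReal_preimage_singleton _ fun x _ => hX (measurableSet_singleton x)]
  simp [pmass, measureReal_def]

lemma expVal_eq_integral [Fintype α] [MeasurableSpace α] [MeasurableSingletonClass α]
    [IsFiniteMeasure μ] {X : Ω → α} (hX : Measurable X) (f : α → ℝ) :
    expVal μ X f = ∫ ω, f (X ω) ∂μ := by
  rw [← integral_map hX.aemeasurable (measurable_of_finite f).aestronglyMeasurable,
    integral_fintype .of_finite]
  simp [expVal, pmass_eq_map_real hX]

lemma expVal_comp [Fintype α] [MeasurableSpace α] [MeasurableSingletonClass α] [Fintype β]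
    [IsFiniteMeasure μ] {X : Ω → α} (hX : Measurable X) (g : α → β) (f : β → ℝ) :
    expVal μ (fun ω => g (X ω)) f = expVal μ X (fun x => f (g x)) := by
  let _ : MeasurableSpace β := ⊤
  have hg : Measurable fun ω => g (X ω) := (measurable_of_finite g).comp hX
  rw [expVal_eq_integral hX, expVal_eq_integral hg]

end Mass

section Independence

variable {Ω α β γ : Type*} [MeasurableSpace Ω] {μ : Measure Ω} [IsProbabilityMeasure μ]
  [MeasurableSpace α] [MeasurableSingletonClass α] [Countable α]
  [MeasurableSpace β] [MeasurableSingletonClass β] [Countable β]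
  [MeasurableSpace γ] [MeasurableSingletonClass γ] [Countable γ]

lemma indepFun_iff_indepRV {X : Ω → α} {Y : Ω → β} (hX : Measurable X) (hY : Measurable Y) :
    IndepFun X Y μ ↔ IndepRV μ X Y := by
  rw [indepFun_iff_map_prod_eq_prod_map_map hX.aemeasurable hY.aemeasurable,
    ext_iff_measureReal_singleton]
  simp only [Prod.forall, ← Set.singleton_prod_singleton, measureReal_prod_prod, IndepRV,
    pmass_eq_map_real hX, pmass_eq_map_real hY, pmass_eq_map_real (hX.prodMk hY)]

lemma indepFun_prodMk_left_of_prodMk_right {X : Ω → α} {Y : Ω → β} {Z : Ω → γ}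
    (hX : Measurable X) (hY : Measurable Y) (hZ : Measurable Z)
    (hXYZ : IndepFun X (fun ω => (Y ω, Z ω)) μ) (hYZ : IndepFun Y Z μ) :
    IndepFun (fun ω => (X ω, Y ω)) Z μ := by
  have hXY : IndepFun X Y μ := hXYZ.comp measurable_id measurable_fst
  rw [indepFun_iff_indepRV (by fun_prop) (by fun_prop)] at hXYZ hYZ hXY ⊢
  rintro ⟨x, y⟩ z
  have hassoc : pmass μ (fun ω => ((X ω, Y ω), Z ω)) ((x, y), z)
      = pmass μ (fun ω => (X ω, Y ω, Z ω)) (x, y, z) := by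
    simp [pmass, Set.preimage, and_assoc]
  rw [hassoc, hXYZ, hYZ, hXY, mul_assoc]

end Independence

section IndependentFamily

variable {Ω ι : Type*} {α : ι → Type*} [MeasurableSpace Ω] {μ : Measure Ω}
  [IsProbabilityMeasure μ] [∀ i, MeasurableSpace (α i)] [∀ i, MeasurableSingletonClass (α i)]
  [∀ i, Countable (α i)]

lemma iIndepFun_iff_pmass_eq_prod [Fintype ι] {X : ∀ i, Ω → α i}
    (hX : ∀ i, Measurable (X i)) :
    iIndepFun X μ ↔ ∀ v, pmass μ (fun ω i => X i ω) v = ∏ i, pmass μ (X i) (v i) := by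
  have (i : ι) := Measure.isProbabilityMeasure_map (μ := μ) (hX i).aemeasurable
  rw [iIndepFun_iff_map_fun_eq_pi_map fun i => (hX i).aemeasurable,
    ext_iff_measureReal_singleton]
  simp only [pmass_eq_map_real (measurable_pi_lambda _ hX), pmass_eq_map_real (hX _),
    measureReal_def, Measure.pi_singleton, ENNReal.toReal_prod]

lemma indepFun_prodMk_finset_of_iIndepFun {β : Type*} [MeasurableSpace β]
    [MeasurableSingletonClass β] [Countable β] {X : ∀ i, Ω → α i} {K : Ω → β}
    (hX : ∀ i, Measurable (X i)) (hK : Measurable K) (hX_indep : iIndepFun X μ)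
    (hK_indep : IndepFun K (fun ω i => X i ω) μ) {s t : Finset ι} (hst : Disjoint s t) :
    IndepFun (fun ω => (K ω, fun i : s => X i ω)) (fun ω (i : t) => X i ω) μ := by
  refine indepFun_prodMk_left_of_prodMk_right hK (by fun_prop) (by fun_prop) ?_
    (hX_indep.indepFun_finset s t hst hX)
  exact hK_indep.comp (φ := id) (ψ := fun x => (fun i : s => x i, fun i : t => x i))
    measurable_id (by fun_prop)

end IndependentFamily

section ProductLaw

variable {Ω ι α : Type*} [Fintype ι] [MeasurableSpace α] [MeasurableSingletonClass α]
  [MeasurableSpace Ω] {μ : Measure Ω} [IsProbabilityMeasure μ] {X : Ω → ι → α} {p : ι → α → ℝ}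

lemma prod_sum_eq_one_of_pmass_eq_prod [Fintype α] (hX : Measurable X)
    (h : ∀ v, pmass μ X v = ∏ i, p i (v i)) : ∏ i, ∑ a, p i a = 1 := by
  classical
  rw [Fintype.prod_sum, ← sum_pmass (μ := μ) hX]
  exact Finset.sum_congr rfl fun v _ => (h v).symm

lemma pmass_apply_mul_sum_of_pmass_eq_prod [Fintype α] (hX : Measurable X)
    (h : ∀ v, pmass μ X v = ∏ i, p i (v i)) (i : ι) (a : α) :
    pmass μ (fun ω => X ω i) a * ∑ b, p i b = p i a := by
  classical
  have hmarginal : pmass μ (fun ω => X ω i) a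
      = ∏ j, Function.update (fun j => ∑ b, p j b) i (p i a) j := calc
    _ = expVal μ (fun ω => X ω i) (fun b => if b = a then 1 else 0) := by simp [expVal]
    _ = ∑ v : ι → α, (∏ j, p j (v j)) * if v i = a then 1 else 0 := by
      rw [expVal_comp hX fun v => v i]
      simp only [expVal, h]
    _ = ∑ v : ι → α, ∏ j, p j (v j) * if j = i then if v j = a then 1 else 0 else 1 := by
      simp only [Finset.prod_mul_distrib, Finset.prod_ite_eq', Finset.mem_univ, if_true]
    _ = ∏ j, Function.update (fun j => ∑ b, p j b) i (p i a) j := by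
      rw [← Fintype.prod_sum fun j b => p j b * if j = i then if b = a then 1 else 0 else 1]
      refine Finset.prod_congr rfl fun j _ => ?_
      obtain rfl | hj := eq_or_ne j i <;> simp [*]
  rw [hmarginal, Finset.prod_update_of_mem (Finset.mem_univ i), mul_assoc, ← Finset.erase_eq,
    Finset.prod_erase_mul _ (fun j => ∑ b, p j b) (Finset.mem_univ i),
    prod_sum_eq_one_of_pmass_eq_prod hX h, mul_one]

lemma iIndepFun_of_pmass_eq_prod [Finite α] (hX : Measurable X)
    (h : ∀ v, pmass μ X v = ∏ i, p i (v i)) : iIndepFun (fun i ω => X ω i) μ := by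
  cases nonempty_fintype α
  refine (iIndepFun_iff_pmass_eq_prod fun i => by fun_prop).2 fun v => ?_
  rw [h, ← mul_one (∏ i, pmass μ _ _), ← prod_sum_eq_one_of_pmass_eq_prod hX h,
    ← Finset.prod_mul_distrib]
  simp only [pmass_apply_mul_sum_of_pmass_eq_prod hX h]

lemma HasIIDLaw.iIndepFun [Finite α] {n : ℕ} {S : Ω → Fin n → α} {p : α → ℝ}
    (h : HasIIDLaw μ S p) (hS : Measurable S) : iIndepFun (fun i ω => S ω i) μ :=
  iIndepFun_of_pmass_eq_prod hS h

end ProductLaw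

section Entropy

variable {Ω α β : Type*} [MeasurableSpace Ω] {μ : Measure Ω}

lemma entropyRV_comp [Fintype α] [MeasurableSpace α] [MeasurableSingletonClass α]
    [Fintype β] [IsFiniteMeasure μ] {X : Ω → α} (hX : Measurable X) (g : α → β) :
    entropyRV μ (fun ω => g (X ω))
      = ∑ x, pmass μ X x * -Real.log (pmass μ (fun ω => g (X ω)) (g x)) := by
  rw [← expVal, ← expVal_comp hX g fun y => -Real.log (pmass μ (fun ω => g (X ω)) y)]
  simp [entropyRV, expVal, Real.negMulLog]

lemma entropyRV_le_of_factorsThrough [Fintype α] [Fintype β] [MeasurableSpace β]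
    [MeasurableSingletonClass β] [IsProbabilityMeasure μ] {X : Ω → α} {Y : Ω → β}
    (hY : Measurable Y) (h : X.FactorsThrough Y) : entropyRV μ X ≤ entropyRV μ Y := by
  obtain ⟨ω₀⟩ := nonempty_of_isProbabilityMeasure μ
  have : Nonempty α := ⟨X ω₀⟩
  obtain ⟨g, rfl⟩ := (Function.factorsThrough_iff X).1 h
  calc entropyRV μ (fun ω => g (Y ω))
      = ∑ y, pmass μ Y y * -Real.log (pmass μ (fun ω => g (Y ω)) (g y)) := entropyRV_comp hY g
    _ ≤ ∑ y, pmass μ Y y * -Real.log (pmass μ Y y) := by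
        refine Finset.sum_le_sum fun y _ => ?_
        by_cases hy : pmass μ Y y = 0
        · simp [hy]
        gcongr
        · exact pmass_nonneg Y y
        · exact pmass_comp_pos hy id
        · exact pmass_le_pmass_comp Y g y
    _ = entropyRV μ Y := (entropyRV_comp hY id).symm

lemma entropyRV_congr [Fintype α] [MeasurableSpace α] [MeasurableSingletonClass α] [Fintype β]
    [MeasurableSpace β] [MeasurableSingletonClass β] [IsProbabilityMeasure μ]
    {X : Ω → α} {Y : Ω → β} (hX : Measurable X) (hY : Measurable Y)
    (hXY : X.FactorsThrough Y) (hYX : Y.FactorsThrough X) :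
    entropyRV μ X = entropyRV μ Y :=
  (entropyRV_le_of_factorsThrough hY hXY).antisymm (entropyRV_le_of_factorsThrough hX hYX)

end Entropy

section Gibbs

lemma sum_mul_log_le_sum_mul_log_self {ι : Type*} [Fintype ι] {p q : ι → ℝ} (hp : ∀ i, 0 ≤ p i)
    (hq : ∀ i, 0 ≤ q i) (hpq : ∀ i, p i ≠ 0 → q i ≠ 0) (hsum : ∑ i, q i ≤ ∑ i, p i) :
    ∑ i, p i * Real.log (q i) ≤ ∑ i, p i * Real.log (p i) := by
  have hterm (i : ι) : p i * Real.log (q i) - p i * Real.log (p i) ≤ q i - p i := by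
    by_cases hpi : p i = 0
    · simpa [hpi] using hq i
    have hp_pos : 0 < p i := (hp i).lt_of_ne' hpi
    have hq_pos : 0 < q i := (hq i).lt_of_ne' (hpq i hpi)
    calc p i * Real.log (q i) - p i * Real.log (p i)
        = p i * Real.log (q i / p i) := by rw [Real.log_div hq_pos.ne' hpi, mul_sub]
      _ ≤ p i * (q i / p i - 1) := by gcongr; exact Real.log_le_sub_one_of_pos (by positivity)
      _ = q i - p i := by field_simp
  have hle := Finset.sum_le_sum fun i (_ : i ∈ Finset.univ) => hterm i
  simp only [Finset.sum_sub_distrib] at hle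
  linarith

end Gibbs

section CondMutualInfo

variable {Ω α β γ : Type*} [MeasurableSpace Ω] {μ : Measure Ω}
  {X : Ω → α} {Y : Ω → β} {Z : Ω → γ}

/-- The mass function `P(x | z) P(y | z) P(z)` of a triple with the same `(X, Z)`- and
`(Y, Z)`-marginals as `(X, Y, Z)`, but with `X` and `Y` conditionally independent given `Z`.
It is the reference law for which `I(X; Y | Z)` is a relative entropy, and it vanishes where
`P(z) = 0`. -/
def condProdMass (μ : Measure Ω) (X : Ω → α) (Y : Ω → β) (Z : Ω → γ) (t : α × β × γ) : ℝ :=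
  pmass μ (fun ω => (X ω, Z ω)) (t.1, t.2.2) * pmass μ (fun ω => (Y ω, Z ω)) t.2 / pmass μ Z t.2.2

lemma condProdMass_nonneg (t : α × β × γ) : 0 ≤ condProdMass μ X Y Z t :=
  div_nonneg (mul_nonneg (pmass_nonneg _ _) (pmass_nonneg _ _)) (pmass_nonneg _ _)

lemma condProdMass_pos [IsFiniteMeasure μ] {t : α × β × γ}
    (ht : pmass μ (fun ω => (X ω, Y ω, Z ω)) t ≠ 0) : 0 < condProdMass μ X Y Z t :=
  div_pos (mul_pos (pmass_comp_pos ht fun t => (t.1, t.2.2)) (pmass_comp_pos ht Prod.snd))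
    (pmass_comp_pos ht fun t => t.2.2)

variable [Fintype α] [MeasurableSpace α] [MeasurableSingletonClass α]
  [Fintype β] [MeasurableSpace β] [MeasurableSingletonClass β] [Fintype γ]

lemma sum_condProdMass [IsFiniteMeasure μ] (hX : Measurable X) (hY : Measurable Y) :
    ∑ t, condProdMass μ X Y Z t = ∑ t, pmass μ (fun ω => (X ω, Y ω, Z ω)) t := by
  have hXYZ : ∑ t, pmass μ (fun ω => (X ω, Y ω, Z ω)) t = ∑ z, pmass μ Z z := by
    simp only [Fintype.sum_prod_type_right, sum_pmass_prodMk hX, sum_pmass_prodMk hY]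
  simp only [hXYZ, condProdMass, Fintype.sum_prod_type_right, ← Finset.sum_div, ← Finset.sum_mul,
    ← Finset.mul_sum, sum_pmass_prodMk hX, sum_pmass_prodMk hY, mul_self_div_self]

variable [MeasurableSpace γ] [MeasurableSingletonClass γ]

lemma condMutualInfoRV_eq_sum_mul_log_sub [IsFiniteMeasure μ] (hX : Measurable X)
    (hY : Measurable Y) (hZ : Measurable Z) :
    condMutualInfoRV μ X Y Z
      = ∑ t, pmass μ (fun ω => (X ω, Y ω, Z ω)) t
          * Real.log (pmass μ (fun ω => (X ω, Y ω, Z ω)) t)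
        - ∑ t, pmass μ (fun ω => (X ω, Y ω, Z ω)) t * Real.log (condProdMass μ X Y Z t) := by
  have hT : Measurable fun ω => (X ω, Y ω, Z ω) := by fun_prop
  have hXYZ : entropyRV μ (fun ω => (X ω, Y ω, Z ω))
      = ∑ t, pmass μ (fun ω => (X ω, Y ω, Z ω)) t
          * -Real.log (pmass μ (fun ω => (X ω, Y ω, Z ω)) t) := entropyRV_comp hT id
  rw [condMutualInfoRV, entropyRV_comp hT fun t => (t.1, t.2.2), entropyRV_comp hT Prod.snd,
    entropyRV_comp hT fun t => t.2.2, hXYZ, ← Finset.sum_add_distrib,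
    ← Finset.sum_sub_distrib, ← Finset.sum_sub_distrib, ← Finset.sum_sub_distrib]
  refine Finset.sum_congr rfl fun t _ => ?_
  by_cases ht : pmass μ (fun ω => (X ω, Y ω, Z ω)) t = 0
  · simp [ht]
  have hXZ : pmass μ (fun ω => (X ω, Z ω)) (t.1, t.2.2) ≠ 0 :=
    (pmass_comp_pos ht fun t => (t.1, t.2.2)).ne'
  have hYZ : pmass μ (fun ω => (Y ω, Z ω)) t.2 ≠ 0 := (pmass_comp_pos ht Prod.snd).ne'
  have hZ : pmass μ Z t.2.2 ≠ 0 := (pmass_comp_pos ht fun t => t.2.2).ne'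
  rw [condProdMass, Real.log_div (mul_ne_zero hXZ hYZ) hZ, Real.log_mul hXZ hYZ]
  ring

lemma condMutualInfoRV_nonneg [IsFiniteMeasure μ] (hX : Measurable X) (hY : Measurable Y)
    (hZ : Measurable Z) : 0 ≤ condMutualInfoRV μ X Y Z := by
  rw [condMutualInfoRV_eq_sum_mul_log_sub hX hY hZ, sub_nonneg]
  exact sum_mul_log_le_sum_mul_log_self (pmass_nonneg _) condProdMass_nonneg
    (fun t ht => (condProdMass_pos ht).ne') (sum_condProdMass hX hY).le

variable [IsProbabilityMeasure μ]

lemma condMutualInfoRV_comm (hX : Measurable X) (hY : Measurable Y) (hZ : Measurable Z) :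
    condMutualInfoRV μ X Y Z = condMutualInfoRV μ Y X Z := by
  have hswap : entropyRV μ (fun ω => (X ω, Y ω, Z ω)) = entropyRV μ (fun ω => (Y ω, X ω, Z ω)) :=
    entropyRV_congr (by fun_prop) (by fun_prop) (fun _ _ h => by grind) (fun _ _ h => by grind)
  rw [condMutualInfoRV, condMutualInfoRV, hswap]
  ring

end CondMutualInfo

section CondEntropy

variable {Ω α β γ : Type*} [MeasurableSpace Ω] {μ : Measure Ω}
  [Fintype α] [Fintype β] [Fintype γ]
  {X : Ω → α} {Y : Ω → β} {Z : Ω → γ}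

lemma condMutualInfoRV_eq_condEntropyRV_sub :
    condMutualInfoRV μ X Y Z
      = condEntropyRV μ X Z - condEntropyRV μ X (fun ω => (Y ω, Z ω)) := by
  rw [condMutualInfoRV, condEntropyRV, condEntropyRV]
  ring

variable [MeasurableSpace α] [MeasurableSingletonClass α] [MeasurableSpace β]
  [MeasurableSingletonClass β] [MeasurableSpace γ] [MeasurableSingletonClass γ]
  [IsProbabilityMeasure μ]

lemma condEntropyRV_le_of_factorsThrough (hX : Measurable X) (hY : Measurable Y)
    (hZ : Measurable Z) (h : Z.FactorsThrough Y) : condEntropyRV μ X Y ≤ condEntropyRV μ X Z := by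
  have hYZ : entropyRV μ Y = entropyRV μ (fun ω => (Y ω, Z ω)) :=
    entropyRV_congr hY (by fun_prop) (fun _ _ h' => congrArg Prod.fst h')
      (fun _ _ h' => Prod.ext h' (h h'))
  have hXYZ : entropyRV μ (fun ω => (X ω, Y ω)) = entropyRV μ (fun ω => (X ω, Y ω, Z ω)) :=
    entropyRV_congr (by fun_prop) (by fun_prop) (fun _ _ h' => by grind)
      (fun ω ω' h' => by have := @h ω ω'; grind)
  calc condEntropyRV μ X Y
      = condEntropyRV μ X (fun ω => (Y ω, Z ω)) := by
        rw [condEntropyRV, condEntropyRV, hYZ, hXYZ]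
    _ ≤ condEntropyRV μ X Z := by
        rw [← sub_nonneg, ← condMutualInfoRV_eq_condEntropyRV_sub]
        exact condMutualInfoRV_nonneg hX hY hZ

lemma entropyRV_prodMk_of_indepFun (hX : Measurable X) (hY : Measurable Y)
    (h : IndepFun X Y μ) :
    entropyRV μ (fun ω => (X ω, Y ω)) = entropyRV μ X + entropyRV μ Y := by
  have hmass : ∀ x y, pmass μ (fun ω => (X ω, Y ω)) (x, y) = pmass μ X x * pmass μ Y y :=
    (indepFun_iff_indepRV hX hY).1 h
  simp only [entropyRV, Fintype.sum_prod_type, hmass, Real.negMulLog_mul, Finset.sum_add_distrib,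
    ← Finset.sum_mul, ← Finset.mul_sum, sum_pmass hX, sum_pmass hY, one_mul]

lemma condEntropyRV_prodMk_of_indepFun (hX : Measurable X) (hY : Measurable Y) (hZ : Measurable Z)
    (h : IndepFun X (fun ω => (Y ω, Z ω)) μ) :
    condEntropyRV μ Y (fun ω => (X ω, Z ω)) = condEntropyRV μ Y Z := by
  have hswap : entropyRV μ (fun ω => (Y ω, X ω, Z ω)) = entropyRV μ (fun ω => (X ω, Y ω, Z ω)) :=
    entropyRV_congr (by fun_prop) (by fun_prop) (fun _ _ h => by grind) (fun _ _ h => by grind)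
  have hXZ : IndepFun X Z μ := h.comp measurable_id measurable_snd
  rw [condEntropyRV, condEntropyRV, hswap, entropyRV_prodMk_of_indepFun hX (by fun_prop) h,
    entropyRV_prodMk_of_indepFun hX hZ hXZ]
  ring

lemma condMutualInfoRV_eq_zero_of_indepFun {δ ε : Type*} [Finite δ] [MeasurableSpace δ]
    [MeasurableSingletonClass δ] [Finite ε] [MeasurableSpace ε] [MeasurableSingletonClass ε]
    {V : Ω → δ} {L : Ω → ε} (hX : Measurable X) (hY : Measurable Y)
    (hZ : Measurable Z) (hV : Measurable V) (hL : Measurable L)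
    (h : IndepFun L (fun ω => (Y ω, V ω)) μ) (hVZ : V.FactorsThrough Z)
    (hXZ : (fun ω => (X ω, Z ω)).FactorsThrough (fun ω => (L ω, V ω))) :
    condMutualInfoRV μ X Y Z = 0 := by
  cases nonempty_fintype δ
  cases nonempty_fintype ε
  refine le_antisymm ?_ (condMutualInfoRV_nonneg hX hY hZ)
  rw [condMutualInfoRV_comm hX hY hZ, condMutualInfoRV_eq_condEntropyRV_sub, sub_nonpos]
  calc condEntropyRV μ Y Z
      ≤ condEntropyRV μ Y V := condEntropyRV_le_of_factorsThrough hY hZ hV hVZ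
    _ = condEntropyRV μ Y (fun ω => (L ω, V ω)) :=
        (condEntropyRV_prodMk_of_indepFun hL hY hV h).symm
    _ ≤ condEntropyRV μ Y (fun ω => (X ω, Z ω)) :=
        condEntropyRV_le_of_factorsThrough hY (by fun_prop) (by fun_prop) hXZ

end CondEntropy

section Sequences

variable {Ω : Type*} [MeasurableSpace Ω] {μ : Measure Ω} [IsProbabilityMeasure μ]

lemma entropyRV_pi_of_iIndepFun {ι : Type*} [Fintype ι] [DecidableEq ι] {α : ι → Type*}
    [∀ i, Fintype (α i)] [∀ i, MeasurableSpace (α i)] [∀ i, MeasurableSingletonClass (α i)]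
    {X : ∀ i, Ω → α i} (hX : ∀ i, Measurable (X i)) (h : iIndepFun X μ) :
    entropyRV μ (fun ω i => X i ω) = ∑ i, entropyRV μ (X i) := by
  have hXpi : Measurable fun ω i => X i ω := measurable_pi_lambda _ hX
  have hlog (v : ∀ i, α i) :
      pmass μ (fun ω i => X i ω) v * -Real.log (pmass μ (fun ω i => X i ω) v)
        = ∑ i, pmass μ (fun ω i => X i ω) v * -Real.log (pmass μ (X i) (v i)) := by
    by_cases hv : pmass μ (fun ω i => X i ω) v = 0
    · simp [hv]
    have hmass := (iIndepFun_iff_pmass_eq_prod hX).1 h v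
    rw [← Finset.mul_sum, Finset.sum_neg_distrib,
      ← Real.log_prod fun i _ => (pmass_comp_pos hv fun v => v i).ne', ← hmass]
  calc entropyRV μ (fun ω i => X i ω)
      = ∑ v, ∑ i, pmass μ (fun ω i => X i ω) v * -Real.log (pmass μ (X i) (v i)) :=
        (entropyRV_comp hXpi id).trans (Finset.sum_congr rfl fun v _ => hlog v)
    _ = ∑ i, entropyRV μ (X i) := by
        rw [Finset.sum_comm]
        exact Finset.sum_congr rfl fun i _ => (entropyRV_comp hXpi fun v => v i).symm

variable {α β : Type*}
  [Fintype α] [MeasurableSpace α] [MeasurableSingletonClass α]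
  [Fintype β] [MeasurableSpace β] [MeasurableSingletonClass β]

lemma condEntropyRV_pi_of_iIndepFun {ι : Type*} [Fintype ι] [DecidableEq ι]
    {X : Ω → ι → α} {Z : Ω → ι → β} (hX : Measurable X) (hZ : Measurable Z)
    (h : iIndepFun (fun i ω => (X ω i, Z ω i)) μ) :
    condEntropyRV μ X Z = ∑ i, condEntropyRV μ (fun ω => X ω i) (fun ω => Z ω i) := by
  have hzip : entropyRV μ (fun ω => (X ω, Z ω)) = entropyRV μ (fun ω i => (X ω i, Z ω i)) :=
    entropyRV_congr (by fun_prop) (by fun_prop)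
      (fun _ _ h => by simpa [funext_iff, forall_and] using h)
      (fun _ _ h => by simpa [funext_iff, forall_and] using h)
  have hZ_indep : iIndepFun (fun i ω => Z ω i) μ := h.comp (fun _ => Prod.snd) (by fun_prop)
  simp only [condEntropyRV, Finset.sum_sub_distrib]
  rw [hzip, entropyRV_pi_of_iIndepFun (by fun_prop) h,
    entropyRV_pi_of_iIndepFun (by fun_prop) hZ_indep]

lemma condEntropyRV_pi_eq_sum {n : ℕ} {X : Ω → Fin n → α} {V : Ω → β} (hX : Measurable X)
    (hV : Measurable V) :
    condEntropyRV μ X V = ∑ i, condEntropyRV μ (fun ω => X ω i)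
      (fun ω => ((fun j : {j // i < j} => X ω j), V ω)) := by
  let suffixEntropy (k : ℕ) : ℝ :=
    entropyRV μ (fun ω => ((fun j : {j : Fin n // k ≤ j} => X ω j), V ω))
  have hzero : suffixEntropy 0 = entropyRV μ (fun ω => (X ω, V ω)) :=
    entropyRV_congr (by fun_prop) (by fun_prop)
      (fun _ _ h => by simp_all) (fun _ _ h => by simp_all [funext_iff])
  have hlast : suffixEntropy n = entropyRV μ V :=
    entropyRV_congr (by fun_prop) hV
      (fun _ _ h => Prod.ext (funext fun j => absurd j.2 j.1.2.not_ge) h) (fun _ _ h => by simp_all)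
  have hstep (i : Fin n) : suffixEntropy i - suffixEntropy (i + 1)
      = condEntropyRV μ (fun ω => X ω i) (fun ω => ((fun j : {j // i < j} => X ω j), V ω)) := by
    have hcons : suffixEntropy i
        = entropyRV μ (fun ω => (X ω i, (fun j : {j // i < j} => X ω j), V ω)) := by
      refine entropyRV_congr (by fun_prop) (by fun_prop) (fun _ _ h => ?_) (fun _ _ h => ?_)
      · simp only [Prod.mk.injEq, funext_iff, Subtype.forall] at h ⊢
        refine ⟨fun j hj => ?_, h.2.2⟩
        obtain rfl | hj := (Fin.le_def.2 hj).eq_or_lt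
        exacts [h.1, h.2.1 j hj]
      · simp only [Prod.mk.injEq, funext_iff, Subtype.forall] at h ⊢
        exact ⟨h.1 i le_rfl, fun j hj => h.1 j hj.le, h.2⟩
    rw [hcons]
    rfl
  rw [condEntropyRV, ← hzero, ← hlast, ← Finset.sum_range_sub',
    ← Fin.sum_univ_eq_sum_range fun k => suffixEntropy k - suffixEntropy (k + 1)]
  exact Finset.sum_congr rfl fun i _ => hstep i

end Sequences

section Converse

-- `X` stands for the sequence written `X̃ⁿ` in the paper.
variable {Ω 𝒳 𝒴 𝒵 𝒲 𝒦 : Type*} [MeasurableSpace Ω] {μ : Measure Ω} [IsProbabilityMeasure μ]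
  [Fintype 𝒳] [MeasurableSpace 𝒳] [MeasurableSingletonClass 𝒳]
  [Fintype 𝒴] [MeasurableSpace 𝒴] [MeasurableSingletonClass 𝒴]
  [Fintype 𝒵] [MeasurableSpace 𝒵] [MeasurableSingletonClass 𝒵]
  [Fintype 𝒲] [Finite 𝒦] [MeasurableSpace 𝒦] [MeasurableSingletonClass 𝒦]
  {n : ℕ} {X : Ω → Fin n → 𝒳} {Y : Ω → Fin n → 𝒴} {Z : Ω → Fin n → 𝒵} {K : Ω → 𝒦}
  {W : Ω → 𝒲}

lemma condMutualInfoRV_present_future_eq_zero [MeasurableSpace 𝒲] [MeasurableSingletonClass 𝒲]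
    (hX : Measurable X) (hY : Measurable Y) (hZ : Measurable Z) (hK : Measurable K)
    (hW : Measurable W)
    (hXYZ : iIndepFun (fun i ω => (X ω i, Y ω i, Z ω i)) μ)
    (hK_indep : IndepFun K (fun ω i => (X ω i, Y ω i, Z ω i)) μ)
    (hWXK : W.FactorsThrough (fun ω => (X ω, K ω))) (i : Fin n) :
    condMutualInfoRV μ (fun ω => X ω i) (fun ω (j : {j // i < j}) => Y ω j)
      (fun ω => ((fun j : {j // i < j} => X ω j), W ω,
        (fun j : {j // j < i} => Z ω j), Z ω i)) = 0 := by
  have hblocks : IndepFun (fun ω => (K ω, fun j : Finset.Iic i => (X ω j, Y ω j, Z ω j)))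
      (fun ω (j : Finset.Ioi i) => (X ω j, Y ω j, Z ω j)) μ :=
    indepFun_prodMk_finset_of_iIndepFun (by fun_prop) hK hXYZ hK_indep
      (Finset.disjoint_left.2 (by simp))
  have hfuture : IndepFun (fun ω => (K ω, fun j : Finset.Iic i => (X ω j, Y ω j, Z ω j)))
      (fun ω => ((fun j : {j // i < j} => Y ω j), (fun j : {j // i < j} => X ω j))) μ := by
    let unzip (s : Finset.Ioi i → 𝒳 × 𝒴 × 𝒵) : ({j // i < j} → 𝒴) × ({j // i < j} → 𝒳) :=
      (fun j => (s ⟨j, Finset.mem_Ioi.2 j.2⟩).2.1, fun j => (s ⟨j, Finset.mem_Ioi.2 j.2⟩).1)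
    exact hblocks.comp (ψ := unzip) measurable_id (measurable_of_finite unzip)
  refine condMutualInfoRV_eq_zero_of_indepFun (by fun_prop) (by fun_prop) (by fun_prop)
    (by fun_prop) (by fun_prop) hfuture (fun _ _ h => congrArg Prod.fst h) fun ω ω' h => ?_
  simp only [Prod.mk.injEq, funext_iff, Subtype.forall, Finset.mem_Iic] at h ⊢
  obtain ⟨⟨hKeq, hpasteq⟩, hfutureeq⟩ := h
  have hXeq : X ω = X ω' :=
    funext fun j => (le_or_gt j i).elim (fun hj => (hpasteq j hj).1) (hfutureeq j)
  exact ⟨congrFun hXeq i, hfutureeq, hWXK (Prod.ext hXeq hKeq), fun j hj => (hpasteq j hj.le).2.2,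
    (hpasteq i le_rfl).2.2⟩

lemma condEntropyRV_future_encoded_le [MeasurableSpace 𝒲] [MeasurableSingletonClass 𝒲]
    (hX : Measurable X) (hY : Measurable Y) (hZ : Measurable Z) (hK : Measurable K)
    (hW : Measurable W)
    (hXYZ : iIndepFun (fun i ω => (X ω i, Y ω i, Z ω i)) μ)
    (hK_indep : IndepFun K (fun ω i => (X ω i, Y ω i, Z ω i)) μ)
    (hWXK : W.FactorsThrough (fun ω => (X ω, K ω))) (i : Fin n) :
    condEntropyRV μ (fun ω => X ω i)
        (fun ω => ((fun j : {j // i < j} => X ω j), W ω, Z ω))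
      ≤ condEntropyRV μ (fun ω => X ω i)
        (fun ω => ((W ω, (fun j : {j // i < j} => Y ω j),
          (fun j : {j // j < i} => Z ω j)), Z ω i)) :=
  calc condEntropyRV μ (fun ω => X ω i)
        (fun ω => ((fun j : {j // i < j} => X ω j), W ω, Z ω))
      ≤ condEntropyRV μ (fun ω => X ω i)
        (fun ω => ((fun j : {j // i < j} => X ω j), W ω,
          (fun j : {j // j < i} => Z ω j), Z ω i)) :=
        condEntropyRV_le_of_factorsThrough (by fun_prop) (by fun_prop) (by fun_prop)
          fun _ _ h => by simp_all
    _ = condEntropyRV μ (fun ω => X ω i)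
        (fun ω => ((fun j : {j // i < j} => Y ω j), (fun j : {j // i < j} => X ω j),
          W ω, (fun j : {j // j < i} => Z ω j), Z ω i)) := by
        rw [← sub_eq_zero, ← condMutualInfoRV_eq_condEntropyRV_sub]
        exact condMutualInfoRV_present_future_eq_zero hX hY hZ hK hW hXYZ hK_indep hWXK i
    _ ≤ _ := condEntropyRV_le_of_factorsThrough (by fun_prop) (by fun_prop) (by fun_prop)
          fun _ _ h => by simp_all

theorem secrecy_leakage_converse_middle_key_general
    (hX : Measurable X) (hY : Measurable Y) (hZ : Measurable Z) (hK : Measurable K)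
    (hXYZ : iIndepFun (fun i ω => (X ω i, Y ω i, Z ω i)) μ)
    (hK_indep : IndepFun K (fun ω i => (X ω i, Y ω i, Z ω i)) μ)
    (enc : (Fin n → 𝒳) → 𝒦 → 𝒲) :
    ∑ i, condMutualInfoRV μ
        (fun ω => (enc (X ω) (K ω), (fun j : {j // i < j} => Y ω j),
          (fun j : {j // j < i} => Z ω j)))
        (fun ω => X ω i) (fun ω => Z ω i)
      ≤ condMutualInfoRV μ X (fun ω => enc (X ω) (K ω)) Z := by
  let _ : MeasurableSpace 𝒲 := ⊤
  have henc : Measurable fun ω => enc (X ω) (K ω) :=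
    (measurable_of_finite fun p : (Fin n → 𝒳) × 𝒦 => enc p.1 p.2).comp (hX.prodMk hK)
  have henc_factors : (fun ω => enc (X ω) (K ω)).FactorsThrough (fun ω => (X ω, K ω)) :=
    fun _ _ h => congrArg (fun p => enc p.1 p.2) h
  have hXZ : iIndepFun (fun i ω => (X ω i, Z ω i)) μ :=
    hXYZ.comp (fun _ s => (s.1, s.2.2)) (by fun_prop)
  rw [condMutualInfoRV_eq_condEntropyRV_sub, condEntropyRV_pi_of_iIndepFun hX hZ hXZ,
    condEntropyRV_pi_eq_sum hX (henc.prodMk hZ), ← Finset.sum_sub_distrib]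
  refine Finset.sum_le_sum fun i _ => ?_
  rw [condMutualInfoRV_comm (by fun_prop) (by fun_prop) (by fun_prop),
    condMutualInfoRV_eq_condEntropyRV_sub]
  exact sub_le_sub_left
    (condEntropyRV_future_encoded_le hX hY hZ hK henc hXYZ hK_indep henc_factors i) _

end Converse

/-- **Secrecy-leakage converse bound (middle/large key regime)**: under the converse
setup, `I(X̃ⁿ; W | Zⁿ) ≥ ∑ᵢ I(Vᵢ; X̃ᵢ | Zᵢ)`. -/
theorem secrecy_leakage_converse_middle_key
    {𝒳 𝒳t 𝒴 𝒵 𝒲 𝒦 : Type}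
    [Fintype 𝒳] [Fintype 𝒳t] [Fintype 𝒴] [Fintype 𝒵] [Fintype 𝒲] [Fintype 𝒦]
    [MeasurableSpace 𝒳] [DiscreteMeasurableSpace 𝒳]
    [MeasurableSpace 𝒳t] [DiscreteMeasurableSpace 𝒳t]
    [MeasurableSpace 𝒴] [DiscreteMeasurableSpace 𝒴]
    [MeasurableSpace 𝒵] [DiscreteMeasurableSpace 𝒵]
    [MeasurableSpace 𝒲] [DiscreteMeasurableSpace 𝒲]
    [MeasurableSpace 𝒦] [DiscreteMeasurableSpace 𝒦]
    {Ω : Type} [MeasurableSpace Ω] (μ : MeasureTheory.Measure Ω)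
    [MeasureTheory.IsProbabilityMeasure μ]
    {n : ℕ} (S : Ω → Fin n → 𝒳t × 𝒳 × 𝒴 × 𝒵) (K : Ω → 𝒦)
    (hSmeas : Measurable S) (hKmeas : Measurable K)
    (pX : 𝒳 → ℝ) (pXt : 𝒳 → 𝒳t → ℝ) (pYZ : 𝒳 → 𝒴 × 𝒵 → ℝ)
    (hpX0 : ∀ x, 0 ≤ pX x) (hpX1 : ∑ x, pX x = 1)
    (hpXt0 : ∀ x a, 0 ≤ pXt x a) (hpXt1 : ∀ x, ∑ a, pXt x a = 1)
    (hpYZ0 : ∀ x yz, 0 ≤ pYZ x yz) (hpYZ1 : ∀ x, ∑ yz, pYZ x yz = 1)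
    (hiid : HasIIDLaw μ S (fun s => pX s.2.1 * pXt s.2.1 s.1 * pYZ s.2.1 s.2.2))
    (hKunif : UniformRV μ K) (hKind : IndepRV μ K S)
    (enc : (Fin n → 𝒳t) → 𝒦 → 𝒲)
    :
    condMutualInfoRV μ (fun ω => fun j => (S ω j).1)
      (fun ω => enc (fun j => (S ω j).1) (K ω))
      (fun ω => fun j => (S ω j).2.2.2)
    ≥ ∑ i : Fin n,
        condMutualInfoRV μ
          (fun ω => (enc (fun j => (S ω j).1) (K ω),
          (fun j : {j : Fin n // i < j} => (S ω j.1).2.2.1),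
          (fun j : {j : Fin n // j.1 < i} => (S ω j.1).2.2.2)))
          (fun ω => (S ω i).1) (fun ω => (S ω i).2.2.2) := by
  have hS_indep : iIndepFun (fun i ω => ((S ω i).1, (S ω i).2.2)) μ :=
    (hiid.iIndepFun hSmeas).comp (fun _ s => (s.1, s.2.2)) (by fun_prop)
  have hK_indep : IndepFun K (fun ω i => ((S ω i).1, (S ω i).2.2)) μ :=
    ((indepFun_iff_indepRV hKmeas hSmeas).2 hKind).comp measurable_id
      (show Measurable fun (s : Fin n → 𝒳t × 𝒳 × 𝒴 × 𝒵) i => ((s i).1, (s i).2.2) by fun_prop)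
  exact secrecy_leakage_converse_middle_key_general (by fun_prop) (by fun_prop) (by fun_prop)
    hKmeas hS_indep hK_indep enc
end
end

section
/- Markov structure of the converse auxiliaries: under the converse setup, for every i ∈ {1,…,n} the chain V_i − U_i − X̃_i − X_i − (Y_i, Z_i) is a Markov chain; in particular, V_i is a deterministic function of U_i, the pair U_i is conditionally independent of (X_i, Y_i, Z_i) given X̃_i, and (U_i, X̃_i) is conditionally independent of (Y_i, Z_i) given X_i. -/
open MeasureTheory

noncomputable section

/-!
Fix `i` and let `R = (K, (S_j)_{j ≠ i})`. The joint law of `(R, X̃ᵢ, Xᵢ, (Yᵢ, Zᵢ))` has the form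
`q(r) f(x, x̃) h(x, (y, z))`. Reading this product as `q(r) · [f(x, x̃) h(x, (y, z))]` gives
`R − X̃ᵢ − (Xᵢ, Yᵢ, Zᵢ)`, and reading it as `[q(r) f(x, x̃)] · h(x, (y, z))` gives
`(R, X̃ᵢ) − Xᵢ − (Yᵢ, Zᵢ)`. Both chains pass to `Uᵢ`, because `Uᵢ` is a function of `R` and `X̃ᵢ`:
the only part of the `i`-th letter that it sees is the `X̃ᵢ` entering the encoder.
-/

section Pmass

variable {Ω α β γ υ : Type*} [MeasurableSpace Ω] {μ : Measure Ω}

lemma pmass_congr {X : Ω → α} {Y : Ω → β} {x : α} {y : β} (h : ∀ ω, X ω = x ↔ Y ω = y) :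
    pmass μ X x = pmass μ Y y := by
  have hpre : X ⁻¹' {x} = Y ⁻¹' {y} := Set.ext h
  simp only [pmass, hpre]

lemma pmass_prodMk (X : Ω → α) (Y : Ω → β) (x : α) (y : β) :
    pmass μ (fun ω => (X ω, Y ω)) (x, y) = μ.real (X ⁻¹' {x} ∩ Y ⁻¹' {y}) := by
  rw [pmass, ← Set.singleton_prod_singleton, Set.mk_preimage_prod, measureReal_def]

variable [IsFiniteMeasure μ] [Countable α] [MeasurableSpace α] [MeasurableSingletonClass α]
  {A : Ω → α}

lemma measureReal_preimage_inter_eq_tsum (hA : Measurable A) (s : Set α) (E : Set Ω) :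
    μ.real (A ⁻¹' s ∩ E) = ∑' a : s, μ.real (A ⁻¹' {a.1} ∩ E) := by
  have hsingleton (a : α) : MeasurableSet (A ⁻¹' {a}) := hA (measurableSet_singleton a)
  have hs : MeasurableSet (A ⁻¹' s) := hA s.to_countable.measurableSet
  have hsum := tsum_measure_preimage_singleton (μ := μ.restrict E) s.to_countable
    fun a _ => hsingleton a
  simp only [Measure.restrict_apply hs, Measure.restrict_apply (hsingleton _)] at hsum
  simp only [measureReal_def, ← hsum, ENNReal.tsum_toReal_eq fun _ => measure_ne_top μ _]

lemma pmass_map_prodMk_eq_tsum (hA : Measurable A) (X : Ω → β) (g : α → β → υ) (u : υ) (x : β) :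
    pmass μ (fun ω => (g (A ω) (X ω), X ω)) (u, x)
      = ∑' a : {a | g a x = u}, pmass μ (fun ω => (A ω, X ω)) (a.1, x) := by
  have hevent : (fun ω => g (A ω) (X ω)) ⁻¹' {u} ∩ X ⁻¹' {x}
      = A ⁻¹' {a | g a x = u} ∩ X ⁻¹' {x} := by
    ext ω
    simp +contextual [and_congr_left_iff]
  simp only [pmass_prodMk, hevent]
  exact measureReal_preimage_inter_eq_tsum hA _ _

lemma pmass_eq_tsum_prodMk_left (hA : Measurable A) (X : Ω → β) (x : β) :
    pmass μ X x = ∑' a, pmass μ (fun ω => (A ω, X ω)) (a, x) := by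
  simp only [pmass_prodMk]
  rw [← tsum_univ fun a => μ.real (A ⁻¹' {a} ∩ X ⁻¹' {x}),
    ← measureReal_preimage_inter_eq_tsum hA, Set.preimage_univ, Set.univ_inter]
  rfl

lemma pmass_eq_tsum_prodMk_right (hA : Measurable A) (X : Ω → β) (x : β) :
    pmass μ X x = ∑' a, pmass μ (fun ω => (X ω, A ω)) (x, a) := by
  rw [pmass_eq_tsum_prodMk_left hA]
  exact tsum_congr fun a => pmass_congr (by simp [and_comm])

lemma CondIndepRV.map_left {B : Ω → β} {C : Ω → γ} (h : CondIndepRV μ A B C) (hA : Measurable A)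
    (g : α → β → υ) : CondIndepRV μ (fun ω => g (A ω) (B ω)) B C := by
  intro u b c
  rw [pmass_map_prodMk_eq_tsum hA (fun ω => (B ω, C ω)) (fun a x => g a x.1),
    pmass_map_prodMk_eq_tsum hA B g, ← tsum_mul_right, ← tsum_mul_right]
  exact tsum_congr fun a => h a.1 b c

lemma condIndepRV_of_pmass_eq_mul [Countable γ] [MeasurableSpace γ] [MeasurableSingletonClass γ]
    {B : Ω → β} {C : Ω → γ} (hA : Measurable A) (hC : Measurable C) (φ : α → β → ℝ) (ψ : β → γ → ℝ)
    (h : ∀ a b c, pmass μ (fun ω => (A ω, B ω, C ω)) (a, b, c) = φ a b * ψ b c) :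
    CondIndepRV μ A B C := by
  intro a b c
  -- The sums of `φ` and `ψ` may diverge: `tsum_mul_left` and `tsum_mul_right` then read `0 = 0`.
  have hAB (a : α) : pmass μ (fun ω => (A ω, B ω)) (a, b) = φ a b * ∑' c, ψ b c := by
    rw [pmass_eq_tsum_prodMk_right hC, ← tsum_mul_left]
    exact tsum_congr fun c => (pmass_congr (by simp [and_assoc])).trans (h a b c)
  have hBC : pmass μ (fun ω => (B ω, C ω)) (b, c) = (∑' a, φ a b) * ψ b c := by
    rw [pmass_eq_tsum_prodMk_left hA, ← tsum_mul_right]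
    exact tsum_congr fun a => h a b c
  have hB : pmass μ B b = (∑' a, φ a b) * ∑' c, ψ b c := by
    rw [pmass_eq_tsum_prodMk_left hA, ← tsum_mul_right]
    exact tsum_congr hAB
  rw [h, hAB, hBC, hB]
  ring

end Pmass

lemma HasIIDLaw.pmass_split_at {Ω α 𝒦 : Type*} [MeasurableSpace Ω] {μ : Measure Ω} {n : ℕ}
    {S : Ω → Fin n → α} {K : Ω → 𝒦} {p : α → ℝ} (hS : HasIIDLaw μ S p) (hK : IndepRV μ K S)
    (i : Fin n) (k : 𝒦) (w : {j // j ≠ i} → α) (s : α) :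
    pmass μ (fun ω => ((K ω, fun j : {j // j ≠ i} => S ω j), S ω i)) ((k, w), s)
      = (pmass μ K k * ∏ j, p (w j)) * p s := by
  have hglue (ω : Ω) : S ω = (Equiv.funSplitAt i α).symm (s, w)
      ↔ S ω i = s ∧ (fun j : {j // j ≠ i} => S ω j) = w := by
    rw [Equiv.eq_symm_apply, Equiv.funSplitAt_apply, Prod.mk.injEq]
  calc _ = pmass μ (fun ω => (K ω, S ω)) (k, (Equiv.funSplitAt i α).symm (s, w)) :=
        pmass_congr fun ω => by simp only [Prod.mk.injEq, hglue]; tauto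
    _ = pmass μ K k * ∏ j, p ((Equiv.funSplitAt i α).symm (s, w) j) := by rw [hK, hS]
    _ = pmass μ K k * (p s * ∏ j, p (w j)) := by
        rw [Fintype.prod_eq_mul_prod_subtype_ne _ i]
        have hne (j : {j // j ≠ i}) : (Equiv.funSplitAt i α).symm (s, w) j = w j := by
          simp [Equiv.funSplitAt_symm_apply, j.2]
        simp only [hne, Equiv.funSplitAt_symm_apply, dite_true]
    _ = _ := by ring

section Converse

variable {𝒳 𝒳t 𝒴 𝒵 𝒲 𝒦 Ω : Type*} {n : ℕ}

/-- The auxiliary `Vᵢ = (W, Y_{i+1}^n, Z^{i-1})` of the converse, where `W = enc (X̃^n, K)` and the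
letters of `S` are `(X̃, X, Y, Z)`. -/
def converseV (enc : (Fin n → 𝒳t) → 𝒦 → 𝒲) (S : Ω → Fin n → 𝒳t × 𝒳 × 𝒴 × 𝒵) (K : Ω → 𝒦)
    (i : Fin n) (ω : Ω) :
    𝒲 × ({j : Fin n // i < j} → 𝒴) × ({j : Fin n // j.1 < i} → 𝒵) :=
  (enc (fun j => (S ω j).1) (K ω), fun j => (S ω j).2.2.1, fun j => (S ω j).2.2.2)

/-- The auxiliary `Uᵢ = (W, Y_{i+1}^n, Z^{i-1}, X^{i-1}, K)` of the converse, with the conventions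
of `converseV`. -/
def converseU (enc : (Fin n → 𝒳t) → 𝒦 → 𝒲) (S : Ω → Fin n → 𝒳t × 𝒳 × 𝒴 × 𝒵) (K : Ω → 𝒦)
    (i : Fin n) (ω : Ω) :
    𝒲 × ({j : Fin n // i < j} → 𝒴) × ({j : Fin n // j.1 < i} → 𝒵) ×
      ({j : Fin n // j.1 < i} → 𝒳) × 𝒦 :=
  (enc (fun j => (S ω j).1) (K ω), fun j => (S ω j).2.2.1, fun j => (S ω j).2.2.2,
    fun j => (S ω j).2.1, K ω)

lemma exists_converseU_eq_comp (enc : (Fin n → 𝒳t) → 𝒦 → 𝒲)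
    (S : Ω → Fin n → 𝒳t × 𝒳 × 𝒴 × 𝒵) (K : Ω → 𝒦) (i : Fin n) :
    ∃ g : 𝒦 × ({j // j ≠ i} → 𝒳t × 𝒳 × 𝒴 × 𝒵) → 𝒳t → _,
      converseU enc S K i = fun ω => g (K ω, fun j => S ω j) (S ω i).1 := by
  refine ⟨fun r a => (enc ((Equiv.funSplitAt i 𝒳t).symm (a, fun j => (r.2 j).1)) r.1,
    fun j => (r.2 ⟨j, j.2.ne'⟩).2.2.1, fun j => (r.2 ⟨j, Fin.ne_of_lt j.2⟩).2.2.2,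
    fun j => (r.2 ⟨j, Fin.ne_of_lt j.2⟩).2.1, r.1), ?_⟩
  funext ω
  have hglue : (Equiv.funSplitAt i 𝒳t).symm ((S ω i).1, fun j => (S ω j).1)
      = fun j => (S ω j).1 :=
    (Equiv.funSplitAt i 𝒳t).symm_apply_apply fun j => (S ω j).1
  simp only [converseU, hglue]

theorem converse_auxiliary_markov_structure_general
    [Countable 𝒳] [Countable 𝒳t] [Countable 𝒴] [Countable 𝒵] [Countable 𝒦]
    [MeasurableSpace 𝒳] [MeasurableSingletonClass 𝒳]
    [MeasurableSpace 𝒳t] [MeasurableSingletonClass 𝒳t]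
    [MeasurableSpace 𝒴] [MeasurableSingletonClass 𝒴]
    [MeasurableSpace 𝒵] [MeasurableSingletonClass 𝒵]
    [MeasurableSpace 𝒦] [MeasurableSingletonClass 𝒦]
    [MeasurableSpace Ω] {μ : Measure Ω} [IsFiniteMeasure μ]
    {S : Ω → Fin n → 𝒳t × 𝒳 × 𝒴 × 𝒵} {K : Ω → 𝒦} (hSmeas : Measurable S) (hKmeas : Measurable K)
    (f : 𝒳 → 𝒳t → ℝ) (h : 𝒳 → 𝒴 × 𝒵 → ℝ)
    (hiid : HasIIDLaw μ S (fun s => f s.2.1 s.1 * h s.2.1 s.2.2)) (hKind : IndepRV μ K S)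
    (enc : (Fin n → 𝒳t) → 𝒦 → 𝒲) (i : Fin n) :
    (∃ v : _ → _, ∀ ω, converseV enc S K i ω = v (converseU enc S K i ω)) ∧
      CondIndepRV μ (converseU enc S K i) (fun ω => (S ω i).1) (fun ω => (S ω i).2) ∧
      CondIndepRV μ (fun ω => (converseU enc S K i ω, (S ω i).1)) (fun ω => (S ω i).2.1)
        (fun ω => (S ω i).2.2) := by
  let R : Ω → 𝒦 × ({j // j ≠ i} → 𝒳t × 𝒳 × 𝒴 × 𝒵) := fun ω => (K ω, fun j => S ω j)
  let q : 𝒦 × ({j // j ≠ i} → 𝒳t × 𝒳 × 𝒴 × 𝒵) → ℝ := fun r =>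
    pmass μ K r.1 * ∏ j, f (r.2 j).2.1 (r.2 j).1 * h (r.2 j).2.1 (r.2 j).2.2
  have hR : Measurable R := by fun_prop
  obtain ⟨g, hg⟩ := exists_converseU_eq_comp enc S K i
  refine ⟨⟨fun u => (u.1, u.2.1, u.2.2.1), fun _ => rfl⟩, ?_, ?_⟩ <;> rw [hg]
  · have hchain : CondIndepRV μ R (fun ω => (S ω i).1) (fun ω => (S ω i).2) :=
      condIndepRV_of_pmass_eq_mul hR (by fun_prop) (fun r _ => q r) (fun a c => f c.1 a * h c.1 c.2)
        fun r a c => hiid.pmass_split_at hKind i r.1 r.2 (a, c)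
    exact hchain.map_left hR g
  · have hchain : CondIndepRV μ (fun ω => (R ω, (S ω i).1)) (fun ω => (S ω i).2.1)
        (fun ω => (S ω i).2.2) :=
      condIndepRV_of_pmass_eq_mul (by fun_prop) (by fun_prop) (fun ra x => q ra.1 * f x ra.2) h
        fun ra x c => by
          rw [mul_assoc, ← hiid.pmass_split_at hKind i ra.1.1 ra.1.2 (ra.2, x, c)]
          exact pmass_congr (by simp [R, Prod.ext_iff, and_assoc])
    exact hchain.map_left (by fun_prop) fun ra _ => (g ra.1 ra.2, ra.2)

end Converse

/-- **Markov structure of the converse auxiliaries**: under the converse setup, for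
every `i` the chain `Vᵢ − Uᵢ − X̃ᵢ − Xᵢ − (Yᵢ, Zᵢ)` is a Markov chain: `Vᵢ` is a
deterministic function of `Uᵢ`, `Uᵢ` is conditionally independent of `(Xᵢ, Yᵢ, Zᵢ)`
given `X̃ᵢ`, and `(Uᵢ, X̃ᵢ)` is conditionally independent of `(Yᵢ, Zᵢ)` given `Xᵢ`. -/
theorem converse_auxiliary_markov_structure
    {𝒳 𝒳t 𝒴 𝒵 𝒲 𝒦 : Type}
    [Fintype 𝒳] [Fintype 𝒳t] [Fintype 𝒴] [Fintype 𝒵] [Fintype 𝒲] [Fintype 𝒦]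
    [MeasurableSpace 𝒳] [DiscreteMeasurableSpace 𝒳]
    [MeasurableSpace 𝒳t] [DiscreteMeasurableSpace 𝒳t]
    [MeasurableSpace 𝒴] [DiscreteMeasurableSpace 𝒴]
    [MeasurableSpace 𝒵] [DiscreteMeasurableSpace 𝒵]
    [MeasurableSpace 𝒲] [DiscreteMeasurableSpace 𝒲]
    [MeasurableSpace 𝒦] [DiscreteMeasurableSpace 𝒦]
    {Ω : Type} [MeasurableSpace Ω] (μ : MeasureTheory.Measure Ω)
    [MeasureTheory.IsProbabilityMeasure μ]
    {n : ℕ} (S : Ω → Fin n → 𝒳t × 𝒳 × 𝒴 × 𝒵) (K : Ω → 𝒦)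
    (hSmeas : Measurable S) (hKmeas : Measurable K)
    (pX : 𝒳 → ℝ) (pXt : 𝒳 → 𝒳t → ℝ) (pYZ : 𝒳 → 𝒴 × 𝒵 → ℝ)
    (hpX0 : ∀ x, 0 ≤ pX x) (hpX1 : ∑ x, pX x = 1)
    (hpXt0 : ∀ x a, 0 ≤ pXt x a) (hpXt1 : ∀ x, ∑ a, pXt x a = 1)
    (hpYZ0 : ∀ x yz, 0 ≤ pYZ x yz) (hpYZ1 : ∀ x, ∑ yz, pYZ x yz = 1)
    (hiid : HasIIDLaw μ S (fun s => pX s.2.1 * pXt s.2.1 s.1 * pYZ s.2.1 s.2.2))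
    (hKunif : UniformRV μ K) (hKind : IndepRV μ K S)
    (enc : (Fin n → 𝒳t) → 𝒦 → 𝒲)
    :
    ∀ i : Fin n,
      (∃ f : 𝒲 × ({j : Fin n // i < j} → 𝒴) × ({j : Fin n // j.1 < i} → 𝒵) ×
            ({j : Fin n // j.1 < i} → 𝒳) × 𝒦 →
            𝒲 × ({j : Fin n // i < j} → 𝒴) × ({j : Fin n // j.1 < i} → 𝒵),
        ∀ ω, (fun ω => (enc (fun j => (S ω j).1) (K ω),
          (fun j : {j : Fin n // i < j} => (S ω j.1).2.2.1),
          (fun j : {j : Fin n // j.1 < i} => (S ω j.1).2.2.2))) ω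
          = f ((fun ω => (enc (fun j => (S ω j).1) (K ω),
          (fun j : {j : Fin n // i < j} => (S ω j.1).2.2.1),
          (fun j : {j : Fin n // j.1 < i} => (S ω j.1).2.2.2),
          (fun j : {j : Fin n // j.1 < i} => (S ω j.1).2.1),
          K ω)) ω)) ∧
      CondIndepRV μ
        (fun ω => (enc (fun j => (S ω j).1) (K ω),
          (fun j : {j : Fin n // i < j} => (S ω j.1).2.2.1),
          (fun j : {j : Fin n // j.1 < i} => (S ω j.1).2.2.2),
          (fun j : {j : Fin n // j.1 < i} => (S ω j.1).2.1),
          K ω))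
        (fun ω => (S ω i).1)
        (fun ω => ((S ω i).2.1, (S ω i).2.2.1, (S ω i).2.2.2)) ∧
      CondIndepRV μ
        (fun ω => ((fun ω => (enc (fun j => (S ω j).1) (K ω),
          (fun j : {j : Fin n // i < j} => (S ω j.1).2.2.1),
          (fun j : {j : Fin n // j.1 < i} => (S ω j.1).2.2.2),
          (fun j : {j : Fin n // j.1 < i} => (S ω j.1).2.1),
          K ω)) ω, (S ω i).1))
        (fun ω => (S ω i).2.1)
        (fun ω => ((S ω i).2.2.1, (S ω i).2.2.2)) := by
  exact converse_auxiliary_markov_structure_general hSmeas hKmeas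
    (fun x a => pX x * pXt x a) pYZ hiid hKind enc
end
end
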